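/- arXiv:2401.11904 — 2 statements merged into one kernel-verified Lean document; each statement's English description precedes it below -/
import Mathlib

section
/- (Theorem 1: Tarski's Euclid axiom A10 fails in Klein's model.) There exist points a, b, c, d, t in ℝ² lying in the open unit disk (i.e., (x 0)^2 + (x 1)^2 < 1 for each of them) such that Bet a d t, Bet b d c, and a ≠ d, but there do not exist points x, y in the open unit disk with Bet a b x, Bet a c y, and Bet x t y. -/
/-!
Take `a` to be the center of the disk, with `b` and `c` on the two coordinate axes and `t` on the
diagonal at `(2/3, 2/3)`. Points `x`, `y` of the disk on the rays `ab`, `ac` have the form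
`(x₀, 0)`, `(0, y₁)` with `x₀, y₁ < 1`, so the sum of the coordinates of any point between them
is less than `1`. For `t` this sum is `4/3`.
-/

def Bet (a b c : Fin 2 → ℝ) : Prop :=
  ∃ k : ℝ, 0 ≤ k ∧ k ≤ 1 ∧ b - a = k • (c - a)

def InDisk (x : Fin 2 → ℝ) : Prop := (x 0) ^ 2 + (x 1) ^ 2 < 1

theorem euclid_fails_in_Klein_model :
    ∃ a b c d t : Fin 2 → ℝ,
      InDisk a ∧ InDisk b ∧ InDisk c ∧ InDisk d ∧ InDisk t ∧
      Bet a d t ∧ Bet b d c ∧ a ≠ d ∧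
      ¬ ∃ x y : Fin 2 → ℝ, InDisk x ∧ InDisk y ∧ Bet a b x ∧ Bet a c y ∧ Bet x t y := by
  refine ⟨![0, 0], ![1/2, 0], ![0, 1/2], ![1/4, 1/4], ![2/3, 2/3], ?_, ?_, ?_, ?_, ?_,
    ⟨3/8, by norm_num, by norm_num, ?_⟩, ⟨1/2, by norm_num, by norm_num, ?_⟩, ?_, ?_⟩
  iterate 5 norm_num [InDisk]
  · ext i; fin_cases i <;> norm_num
  · ext i; fin_cases i <;> norm_num
  · intro h
    have := congrFun h 0
    norm_num at this
  · rintro ⟨x, y, hx, hy, ⟨k, -, -, hk⟩, ⟨l, -, -, hl⟩, ⟨m, hm0, hm1, hm⟩⟩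
    have hk0 : 1/2 = k * x 0 := by simpa [Matrix.vecHead, Matrix.vecTail] using congrFun hk 0
    have hk1 : 0 = k * x 1 := by simpa [Matrix.vecHead, Matrix.vecTail] using congrFun hk 1
    have hl0 : 0 = l * y 0 := by simpa [Matrix.vecHead, Matrix.vecTail] using congrFun hl 0
    have hl1 : 1/2 = l * y 1 := by simpa [Matrix.vecHead, Matrix.vecTail] using congrFun hl 1
    have hm0' : 2/3 - x 0 = m * (y 0 - x 0) := by simpa [Matrix.vecHead, Matrix.vecTail] using congrFun hm 0
    have hm1' : 2/3 - x 1 = m * (y 1 - x 1) := by simpa [Matrix.vecHead, Matrix.vecTail] using congrFun hm 1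
    have hx1 : x 1 = 0 := by
      rcases mul_eq_zero.mp hk1.symm with h | h
      · norm_num [h] at hk0
      · exact h
    have hy0 : y 0 = 0 := by
      rcases mul_eq_zero.mp hl0.symm with h | h
      · norm_num [h] at hl1
      · exact h
    unfold InDisk at hx hy
    have hx0 : x 0 < 1 := by nlinarith [sq_nonneg (x 1)]
    have hy1 : y 1 < 1 := by nlinarith [sq_nonneg (y 0)]
    rw [hx1, hy0] at *
    nlinarith [mul_nonneg hm0 (sub_nonneg.mpr hy1.le),
      mul_nonneg (sub_nonneg.mpr hm1) (sub_nonneg.mpr hx0.le)]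
end

section
/- (Explicit witness for the failure of Euclid's axiom in Klein's model.) Let a = (0, 0), b = (0, 1/2), c = (1/2, 0), d = (1/4, 1/4), and t = (1/2, 1/2) in ℝ². Then Bet a d t, Bet b d c, a ≠ d, and ¬(Bet a b c ∨ Bet b c a ∨ Bet c a b); moreover, for all points x, y in ℝ² with (x 0)^2 + (x 1)^2 < 1, Bet a b x, Bet a c y, and Bet x t y, one has (y 0)^2 + (y 1)^2 ≥ 1 (i.e., y lies outside the open unit disk). -/
theorem bet_iff_coords (a b c : Fin 2 → ℝ) :
    Bet a b c ↔ ∃ k : ℝ, 0 ≤ k ∧ k ≤ 1 ∧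
      b 0 - a 0 = k * (c 0 - a 0) ∧ b 1 - a 1 = k * (c 1 - a 1) := by
  simp [Bet, funext_iff, Fin.forall_fin_two]

theorem euclid_fails_in_Klein_model_witness
    (a b c d t : Fin 2 → ℝ)
    (ha : a = ![0, 0]) (hb : b = ![0, 1 / 2]) (hc : c = ![1 / 2, 0])
    (hd : d = ![1 / 4, 1 / 4]) (ht : t = ![1 / 2, 1 / 2]) :
    Bet a d t ∧ Bet b d c ∧ a ≠ d ∧
    ¬ (Bet a b c ∨ Bet b c a ∨ Bet c a b) ∧
    ∀ x y : Fin 2 → ℝ, (x 0) ^ 2 + (x 1) ^ 2 < 1 →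
      Bet a b x → Bet a c y → Bet x t y →
      (y 0) ^ 2 + (y 1) ^ 2 ≥ 1 := by
  subst ha hb hc hd ht
  simp only [bet_iff_coords, Matrix.cons_val_zero, Matrix.cons_val_one]
  refine ⟨⟨1 / 2, by norm_num⟩, ⟨1 / 2, by norm_num⟩, ?_, ?_, ?_⟩
  · intro h
    have h0 := congrFun h 0
    norm_num at h0
  · rintro (⟨k, -, -, h0, h1⟩ | ⟨k, -, -, h0, h1⟩ | ⟨k, -, -, h0, h1⟩) <;> linarith
  · rintro x y hx ⟨k, -, -, hk0, hk1⟩ ⟨l, -, -, hl0, hl1⟩ ⟨m, hm, hm', h0, h1⟩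
    have hk : k ≠ 0 := by rintro rfl; norm_num at hk1
    have hl : l ≠ 0 := by rintro rfl; norm_num at hl0
    have hx0 : x 0 = 0 := by simpa [hk] using hk0
    have hy1 : y 1 = 0 := by simpa [hl] using hl1
    rw [hx0] at h0
    rw [hy1] at h1
    have hx1 : x 1 < 1 := by nlinarith [sq_nonneg (x 0)]
    have hm2 : m < 1 / 2 := by
      have hne : m ≠ 1 := by rintro rfl; linarith
      have : 0 < 1 - m := by
        rw [sub_pos]; exact lt_of_le_of_ne hm' hne
      nlinarith
    have hy0 : 1 < y 0 := by
      by_contra! hle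
      nlinarith [mul_le_mul_of_nonneg_left hle hm]
    nlinarith [sq_nonneg (y 1)]
end
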